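/- Let m be a positive natural number and Δt > 0. Consider the real block matrices F = [[I_m, Δt·I_m], [0, I_m]] ∈ ℝ^{2m×2m} and G = [[0], [Δt·I_m]] ∈ ℝ^{2m×m}. Then the operator (spectral) norms are ‖F‖ = √(1 + (Δt/2)(Δt + √(Δt² + 4))) and ‖G‖ = Δt. -/

import Mathlib

open Matrix

/-- The operator (spectral) norm of a real matrix, i.e. the operator norm of the
induced linear map between Euclidean spaces. -/
noncomputable def matOpNorm {m n : Type*} [Fintype m] [Fintype n] [DecidableEq n]
    (A : Matrix m n ℝ) : ℝ :=
  ‖LinearMap.toContinuousLinearMap (Matrix.toEuclideanLin A)‖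

/-!
Let `σ` be a root of `σ² = tσ + 1` with `tσ ≥ 0`; the other root is `t - σ = -1/σ`. The shear
`F (u, v) = (u + t v, v)` satisfies `‖F (u, v)‖² + tσ ‖u - (σ - t) v‖² = σ² ‖(u, v)‖²`, so it
stretches no vector by more than `|σ|`, and it stretches `(u, σ u)` by exactly `|σ|`. Hence
`‖F‖ = |σ| = (|t| + √(t² + 4)) / 2`, whose square is `1 + |t| / 2 * (|t| + √(t² + 4))`.
-/

theorem opNorm_eq_of_norm_le_of_norm_eq {𝕜 E F : Type*} [NontriviallyNormedField 𝕜]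
    [NormedAddCommGroup E] [NormedSpace 𝕜 E] [SeminormedAddCommGroup F] [NormedSpace 𝕜 F]
    {f : E →L[𝕜] F} {c : ℝ} {x : E} (hle : ∀ y, ‖f y‖ ≤ c * ‖y‖) (hx : x ≠ 0)
    (heq : ‖f x‖ = c * ‖x‖) : ‖f‖ = c := by
  have hx_pos : 0 < ‖x‖ := norm_pos_iff.mpr hx
  have hc : 0 ≤ c := nonneg_of_mul_nonneg_left (heq ▸ norm_nonneg (f x)) hx_pos
  refine ContinuousLinearMap.opNorm_eq_of_bounds hc hle fun N _ hN => ?_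
  exact le_of_mul_le_mul_right (heq ▸ hN x) hx_pos

section Rows

open scoped Matrix.Norms.L2Operator

variable {k m n : Type*} [Fintype k] [Fintype m] [Fintype n] [DecidableEq n]

theorem matOpNorm_eq_l2_opNorm (A : Matrix m n ℝ) : matOpNorm A = ‖A‖ :=
  rfl

theorem matOpNorm_smul_one [Nonempty n] (t : ℝ) : matOpNorm (t • (1 : Matrix n n ℝ)) = |t| := by
  rw [matOpNorm_eq_l2_opNorm, norm_smul, CStarRing.norm_one, mul_one, Real.norm_eq_abs]

theorem matOpNorm_fromRows_zero (B : Matrix m n ℝ) :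
    matOpNorm (fromRows (0 : Matrix k n ℝ) B) = matOpNorm B := by
  have hgram : (fromRows (0 : Matrix k n ℝ) B)ᴴ * fromRows (0 : Matrix k n ℝ) B = Bᴴ * B := by
    rw [conjTranspose_fromRows_eq_fromCols_conjTranspose, fromCols_mul_fromRows, Matrix.mul_zero,
      zero_add]
  simp only [matOpNorm_eq_l2_opNorm]
  rw [← mul_self_inj (norm_nonneg _) (norm_nonneg _), ← l2_opNorm_conjTranspose_mul_self, hgram,
    l2_opNorm_conjTranspose_mul_self]

end Rows

section Shear

/-- The matrix of the shear `(u, v) ↦ (u + t v, v)` of `ℝⁿ × ℝⁿ`, which is the state-transition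
matrix of the double integrator with sampling period `t`. The summands of `n ⊕ n` index `u`
(position) and `v` (velocity). -/
def blockShear (n : Type*) [DecidableEq n] (t : ℝ) : Matrix (n ⊕ n) (n ⊕ n) ℝ :=
  fromBlocks 1 (t • 1) 0 1

variable {n : Type*} [Fintype n] [DecidableEq n] {t σ : ℝ}

theorem norm_sq_toEuclideanLin_blockShear (t : ℝ) (x : EuclideanSpace ℝ (n ⊕ n)) :
    ‖toEuclideanLin (blockShear n t) x‖ ^ 2 =
      ∑ i, ((x (.inl i) + t * x (.inr i)) ^ 2 + x (.inr i) ^ 2) := by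
  simp [blockShear, EuclideanSpace.real_norm_sq_eq, fromBlocks_mulVec, smul_mulVec,
    Finset.sum_add_distrib]

theorem norm_sq_toEuclideanLin_blockShear_add_defect (hσ : σ ^ 2 = t * σ + 1)
    (x : EuclideanSpace ℝ (n ⊕ n)) :
    ‖toEuclideanLin (blockShear n t) x‖ ^ 2 +
        t * σ * ∑ i, (x (.inl i) - (σ - t) * x (.inr i)) ^ 2 = σ ^ 2 * ‖x‖ ^ 2 := by
  have hcoord (a b : ℝ) : (a + t * b) ^ 2 + b ^ 2 + t * σ * (a - (σ - t) * b) ^ 2 =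
      σ ^ 2 * (a ^ 2 + b ^ 2) := by
    linear_combination (-a ^ 2 - 2 * t * a * b + (t * (σ - t) - 1) * b ^ 2) * hσ
  rw [norm_sq_toEuclideanLin_blockShear, EuclideanSpace.real_norm_sq_eq, Fintype.sum_sum_type,
    ← Finset.sum_add_distrib, Finset.mul_sum, Finset.mul_sum, ← Finset.sum_add_distrib]
  exact Finset.sum_congr rfl fun i _ => hcoord _ _

theorem matOpNorm_blockShear_eq_abs_root [Nonempty n] (hσ : σ ^ 2 = t * σ + 1) (htσ : 0 ≤ t * σ) :
    matOpNorm (blockShear n t) = |σ| := by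
  let x : EuclideanSpace ℝ (n ⊕ n) := WithLp.toLp 2 (Sum.elim (fun _ => 1) fun _ => σ)
  have hx : x ≠ 0 := fun h => by
    simpa [x] using congrArg (fun y => y (.inl (Classical.arbitrary n))) h
  refine opNorm_eq_of_norm_le_of_norm_eq (x := x) (fun y => ?_) hx ?_
  · refine le_of_sq_le_sq ?_ (by positivity)
    rw [mul_pow, sq_abs, ← norm_sq_toEuclideanLin_blockShear_add_defect hσ]
    exact le_add_of_nonneg_right (by positivity)
  · have hdefect (i : n) : x (.inl i) - (σ - t) * x (.inr i) = 0 := by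
      simp only [x, Sum.elim_inl, Sum.elim_inr]
      linear_combination -hσ
    rw [← sq_eq_sq₀ (norm_nonneg _) (by positivity), mul_pow, sq_abs,
      ← norm_sq_toEuclideanLin_blockShear_add_defect hσ]
    simp [hdefect]

theorem matOpNorm_blockShear [Nonempty n] (t : ℝ) :
    matOpNorm (blockShear n t) = (|t| + √(t ^ 2 + 4)) / 2 := by
  have hdisc : √(t ^ 2 + 4) ^ 2 = t ^ 2 + 4 := Real.sq_sqrt (by positivity)
  obtain ht | ht := le_total 0 t
  · rw [matOpNorm_blockShear_eq_abs_root (σ := (t + √(t ^ 2 + 4)) / 2)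
      (by linear_combination hdisc / 4) (by positivity), abs_of_nonneg (by positivity),
      abs_of_nonneg ht]
  · have hroot_nonpos : (t - √(t ^ 2 + 4)) / 2 ≤ 0 := by linarith [Real.sqrt_nonneg (t ^ 2 + 4)]
    rw [matOpNorm_blockShear_eq_abs_root (σ := (t - √(t ^ 2 + 4)) / 2)
      (by linear_combination hdisc / 4) (mul_nonneg_of_nonpos_of_nonpos ht hroot_nonpos),
      abs_of_nonpos hroot_nonpos, abs_of_nonpos ht]
    ring

end Shear

theorem sqrt_one_add_half_mul_add_sqrt {a : ℝ} (ha : 0 ≤ a) :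
    √(1 + a / 2 * (a + √(a ^ 2 + 4))) = (a + √(a ^ 2 + 4)) / 2 := by
  have hdisc : √(a ^ 2 + 4) ^ 2 = a ^ 2 + 4 := Real.sq_sqrt (by positivity)
  rw [Real.sqrt_eq_iff_eq_sq (by positivity) (by positivity)]
  linear_combination -hdisc / 4

theorem double_integrator_matrix_norms_general {n : Type*} [Fintype n] [DecidableEq n] [Nonempty n]
    (t : ℝ) :
    matOpNorm (blockShear n t) = √(1 + |t| / 2 * (|t| + √(t ^ 2 + 4))) ∧
      matOpNorm (fromRows (0 : Matrix n n ℝ) (t • (1 : Matrix n n ℝ))) = |t| := by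
  constructor
  · rw [matOpNorm_blockShear, ← sq_abs t, sqrt_one_add_half_mul_add_sqrt (abs_nonneg t)]
  · rw [matOpNorm_fromRows_zero, matOpNorm_smul_one]

/-- for the double-integrator discretization matrices
`F = [[I, Δt I], [0, I]]` and `G = [[0], [Δt I]]`, the operator (spectral) norms are
`‖F‖ = √(1 + (Δt/2)(Δt + √(Δt² + 4)))` and `‖G‖ = Δt`. -/
theorem double_integrator_matrix_norms
    (m : ℕ) (hm : 0 < m) (Δt : ℝ) (hΔt : 0 < Δt)
    (F : Matrix (Fin m ⊕ Fin m) (Fin m ⊕ Fin m) ℝ)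
    (G : Matrix (Fin m ⊕ Fin m) (Fin m) ℝ)
    (hF : F = Matrix.fromBlocks (1 : Matrix (Fin m) (Fin m) ℝ)
      (Δt • (1 : Matrix (Fin m) (Fin m) ℝ)) 0 (1 : Matrix (Fin m) (Fin m) ℝ))
    (hG : G = Matrix.fromRows (0 : Matrix (Fin m) (Fin m) ℝ)
      (Δt • (1 : Matrix (Fin m) (Fin m) ℝ))) :
    matOpNorm F = Real.sqrt (1 + Δt / 2 * (Δt + Real.sqrt (Δt ^ 2 + 4))) ∧
    matOpNorm G = Δt := by
  have : Nonempty (Fin m) := Fin.pos_iff_nonempty.mp hm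
  simpa only [hF, hG, abs_of_pos hΔt, blockShear] using
    double_integrator_matrix_norms_general (n := Fin m) Δt
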